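/- Extremal points of the set of trace-one three-outcome qutrit POVMs are rank-one projective measurements: if M = (M_1, M_2, M_3) is a POVM on ℂ³ with tr(M_i) = 1 for all i, and M is extremal in the convex set of such POVMs, then each M_i = |ψ_i⟩⟨ψ_i| for an orthonormal basis {ψ_1, ψ_2, ψ_3} of ℂ³. Equivalently, every trace-one three-outcome qutrit POVM is a convex combination of rank-one projective measurements. -/

import Mathlib

open scoped ComplexOrder
open Matrix

/-- An `n`-outcome POVM on `ℂ^d`. -/
def IsPOVM {d n : ℕ} (M : Fin n → Matrix (Fin d) (Fin d) ℂ) : Prop :=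
  (∀ i, (M i).PosSemidef) ∧ ∑ i, M i = 1

/-- The set `P₁(3,3)` of three-outcome qutrit POVMs with trace-one effects. -/
def P1 : Set (Fin 3 → Matrix (Fin 3) (Fin 3) ℂ) :=
  {M | IsPOVM M ∧ ∀ i, (M i).trace = 1}

/-- Rank-one projective measurements on `ℂ³`: POVMs whose effects are
rank-one orthogonal projections (equivalently, trace-one projections). -/
def RankOneProjective : Set (Fin 3 → Matrix (Fin 3) (Fin 3) ℂ) :=
  {P | IsPOVM P ∧ ∀ i, (P i).IsHermitian ∧ P i * P i = P i ∧ (P i).trace = 1}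

/-!
Let `M` be an extreme point of the POVMs with prescribed traces. A traceless Hermitian matrix `X`
vanishing on `ker (M i)` can be added to `M i`, with a small coefficient of either sign, without
leaving the positive semidefinite cone, and such `X` form a real space of dimension
`(rank (M i))² - 1`. Extremality says that the spaces attached to the different `i` are linearly
independent. For `i ∈ s` they all lie in the space attached to `∑ i ∈ s, M i`, so
`∑ i ∈ s, ((rank (M i))² - 1) ≤ (rank (∑ i ∈ s, M i))² - 1`.

Suppose now that all traces are `1` and let `s` be the set of the `m` effects of rank at least two.
The other effects are rank-one projections, so `∑ i ∈ s, M i` is a projection of rank `m`. If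
`m ≠ 0` then `3 m ≤ m² - 1`, which forces `m ≥ 4`. With at most three outcomes every effect of `M`
is therefore a rank-one projection, and projections summing to `1` are orthogonal.

By Krein-Milman every trace-one POVM lies in the closed convex hull of the rank-one projective
measurements. By Carathéodory the convex hull of this compact set is already closed.
-/

open Module Topology Filter

section Dimension

lemma finrank_eq_two_mul_finrank_selfAdjoint (A : Type*) [AddCommGroup A] [Module ℂ A]
    [StarAddMonoid A] [StarModule ℂ A] [FiniteDimensional ℝ A] :
    finrank ℝ A = 2 * finrank ℝ (selfAdjoint A) := by
  have h_inj : Function.Injective (skewAdjoint.negISMul (A := A)) := fun a b hab => by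
    rw [Subtype.ext_iff, ← skewAdjoint.I_smul_neg_I a, hab, skewAdjoint.I_smul_neg_I]
  have h_surj : Function.Surjective (skewAdjoint.negISMul (A := A)) := fun a =>
    ⟨⟨Complex.I • (a : A), Complex.I_smul_mem_skewAdjoint_iff_isSelfAdjoint.2 a.2⟩,
      Subtype.ext (by simp [smul_smul])⟩
  have h_skew : finrank ℝ (skewAdjoint A) = finrank ℝ (selfAdjoint A) :=
    (LinearEquiv.ofBijective _ ⟨h_inj, h_surj⟩).finrank_eq
  have : FiniteDimensional ℝ (selfAdjoint A) :=
    inferInstanceAs (FiniteDimensional ℝ (selfAdjoint.submodule ℝ A))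
  have : FiniteDimensional ℝ (skewAdjoint A) :=
    inferInstanceAs (FiniteDimensional ℝ (skewAdjoint.submodule ℝ A))
  rw [(StarModule.decomposeProdAdjoint ℝ A).finrank_eq, finrank_prod, h_skew, two_mul]

lemma finrank_biSup_of_iSupIndep {K V ι : Type*} [DivisionRing K] [AddCommGroup V] [Module K V]
    [FiniteDimensional K V] {p : ι → Submodule K V} (hp : iSupIndep p) (s : Finset ι) :
    finrank K (⨆ i ∈ s, p i : Submodule K V) = ∑ i ∈ s, finrank K (p i) := by
  classical
  induction s using Finset.induction with
  | empty => simp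
  | insert i s hi ih =>
    have h_inf : p i ⊓ ⨆ j ∈ s, p j = ⊥ := (hp.disjoint_biSup (y := ↑s) hi).eq_bot
    have h := Submodule.finrank_sup_add_finrank_inf_eq (p i) (⨆ j ∈ s, p j)
    rw [h_inf, finrank_bot, add_zero] at h
    rw [Finset.iSup_insert, Finset.sum_insert hi, h, ih]

end Dimension

section TracelessHermitian

variable {n : Type*} [Fintype n]

variable (n) in
/-- The real vector space of traceless Hermitian matrices: the directions in which a Hermitian
matrix can be moved without changing its trace. -/
def tracelessHermitian : Submodule ℝ (Matrix n n ℂ) where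
  carrier := {X | X.IsHermitian ∧ X.trace = 0}
  add_mem' hX hY := ⟨hX.1.add hY.1, by rw [trace_add, hX.2, hY.2, add_zero]⟩
  zero_mem' := ⟨isHermitian_zero, trace_zero n ℂ⟩
  smul_mem' t _ hX := ⟨hX.1.smul (IsSelfAdjoint.all t), by rw [trace_smul, hX.2, smul_zero]⟩

-- For empty `n` the truncated subtraction gives the correct value `0`.
lemma finrank_tracelessHermitian : finrank ℝ (tracelessHermitian n) = Fintype.card n ^ 2 - 1 := by
  classical
  let H := selfAdjoint.submodule ℝ (Matrix n n ℂ)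
  let reTrace : H →ₗ[ℝ] ℝ := Complex.reLm ∘ₗ traceLinearMap n ℝ ℂ ∘ₗ H.subtype
  have h_map : (LinearMap.ker reTrace).map H.subtype = tracelessHermitian n := by
    ext X
    have h_real (hX : X.IsHermitian) : X.trace = 0 ↔ X.trace.re = 0 := by
      have h_conj : star X.trace = X.trace := by rw [← trace_conjTranspose, hX.eq]
      rw [Complex.ext_iff, Complex.zero_re, Complex.zero_im, Complex.conj_eq_iff_im.1 h_conj]
      exact and_iff_left rfl
    simp only [Submodule.mem_map, LinearMap.mem_ker, Subtype.exists]
    constructor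
    · rintro ⟨Y, hY, h_trace, rfl⟩
      exact ⟨hY, (h_real hY).2 h_trace⟩
    · rintro ⟨hX, h_trace⟩
      exact ⟨X, hX, (h_real hX).1 h_trace, rfl⟩
  have h_finrank : finrank ℝ H = Fintype.card n ^ 2 := by
    have h := finrank_eq_two_mul_finrank_selfAdjoint (Matrix n n ℂ)
    rw [finrank_matrix, Complex.finrank_real_complex] at h
    change finrank ℝ (selfAdjoint (Matrix n n ℂ)) = _
    linarith
  rw [← h_map, Submodule.finrank_map_subtype_eq, ← h_finrank]
  rcases isEmpty_or_nonempty n with _ | _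
  · have h := h_finrank ▸ Submodule.finrank_le (LinearMap.ker reTrace)
    rw [h_finrank]
    rw [Fintype.card_eq_zero] at h ⊢
    omega
  · have h_ne : reTrace ≠ 0 := fun h => by
      have := LinearMap.congr_fun h ⟨1, isHermitian_one⟩
      simp [reTrace] at this
    exact Nat.eq_sub_of_add_eq (Dual.finrank_ker_add_one_of_ne_zero h_ne)

end TracelessHermitian

section ConvexHull

variable {E : Type*} [AddCommGroup E] [Module ℝ E] [FiniteDimensional ℝ E]

lemma convexHull_eq_iUnion_image_stdSimplex_prod_pi (s : Set E) :
    convexHull ℝ s = ⋃ n ∈ Finset.range (finrank ℝ E + 2),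
      (fun p : (Fin n → ℝ) × (Fin n → E) => ∑ i, p.1 i • p.2 i) ''
        (stdSimplex ℝ (Fin n) ×ˢ Set.univ.pi fun _ => s) := by
  refine Set.Subset.antisymm (fun x hx => ?_) (Set.iUnion₂_subset fun n _ => ?_)
  · obtain ⟨ι, _, z, w, hz, h_indep, hw, hw_sum, rfl⟩ := eq_pos_convex_span_of_mem_convexHull hx
    have h_card : Fintype.card ι < finrank ℝ E + 2 :=
      Nat.lt_succ_of_le <| h_indep.card_le_finrank_succ.trans <|
        Nat.succ_le_succ (Submodule.finrank_le _)
    let e := (Fintype.equivFin ι).symm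
    refine Set.mem_iUnion₂.2 ⟨Fintype.card ι, Finset.mem_range.2 h_card, (w ∘ e, z ∘ e),
      ⟨⟨fun i => (hw _).le, ?_⟩, fun i _ => hz ⟨_, rfl⟩⟩, e.sum_comp fun i => w i • z i⟩
    exact (e.sum_comp w).trans hw_sum
  · rintro _ ⟨⟨w, z⟩, ⟨⟨hw, hw_sum⟩, hz⟩, rfl⟩
    exact (convex_convexHull ℝ s).sum_mem (fun i _ => hw i) hw_sum
      fun i _ => subset_convexHull ℝ s (hz i trivial)

lemma isCompact_convexHull [TopologicalSpace E] [IsTopologicalAddGroup E] [ContinuousSMul ℝ E]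
    {s : Set E} (hs : IsCompact s) : IsCompact (convexHull ℝ s) := by
  rw [convexHull_eq_iUnion_image_stdSimplex_prod_pi]
  refine Finset.isCompact_biUnion _ fun n _ => ?_
  exact ((isCompact_stdSimplex ℝ (Fin n)).prod (isCompact_univ_pi fun _ => hs)).image (by fun_prop)

end ConvexHull

section PosSemidef

lemma mulVec_eq_zero_of_sum_mulVec_eq_zero {𝕜 n ι : Type*} [RCLike 𝕜] [Fintype n]
    {M : ι → Matrix n n 𝕜} {s : Finset ι} (hM : ∀ i ∈ s, (M i).PosSemidef) {v : n → 𝕜}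
    (hv : (∑ i ∈ s, M i) *ᵥ v = 0) {i : ι} (hi : i ∈ s) : M i *ᵥ v = 0 := by
  have h_sum : ∑ j ∈ s, star v ⬝ᵥ (M j *ᵥ v) = 0 := by
    rw [← dotProduct_sum, ← sum_mulVec, hv, dotProduct_zero]
  have h_nonneg : ∀ j ∈ s, 0 ≤ star v ⬝ᵥ (M j *ᵥ v) := fun j hj =>
    (hM j hj).dotProduct_mulVec_nonneg v
  exact ((hM i hi).dotProduct_mulVec_zero_iff v).1
    ((Finset.sum_eq_zero_iff_of_nonneg h_nonneg).1 h_sum i hi)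

lemma exists_isometry_mul_diagonal_mul_conjTranspose {n : Type*} [Fintype n]
    {A : Matrix n n ℂ} (hA : A.PosSemidef) :
    ∃ (V : Matrix n (Fin A.rank) ℂ) (w : Fin A.rank → ℝ),
      Vᴴ * V = 1 ∧ (∀ k, 0 < w k) ∧ A = V * diagonal (fun k => (w k : ℂ)) * Vᴴ := by
  classical
  set lam := hA.isHermitian.eigenvalues
  set U : Matrix n n ℂ := ↑hA.isHermitian.eigenvectorUnitary
  have h_card : Fintype.card (Fin A.rank) = Fintype.card {i // lam i ≠ 0} := by
    rw [Fintype.card_fin, hA.isHermitian.rank_eq_card_non_zero_eigs]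
  let e : Fin A.rank ≃ {i // lam i ≠ 0} := Fintype.equivOfCardEq h_card
  refine ⟨U.submatrix id (fun k => e k), fun k => lam (e k), ?_, fun k => ?_, ?_⟩
  · have h_unitary : Uᴴ * U = 1 :=
      Unitary.coe_star_mul_self hA.isHermitian.eigenvectorUnitary
    rw [conjTranspose_submatrix, ← submatrix_mul _ _ _ _ _ Function.bijective_id, h_unitary]
    exact submatrix_one _ (Subtype.val_injective.comp e.injective)
  · exact lt_of_le_of_ne (hA.eigenvalues_nonneg _) (e k).2.symm
  · have h_spec : A = U * diagonal (fun i => (lam i : ℂ)) * Uᴴ := by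
      conv_lhs => rw [hA.isHermitian.spectral_theorem, Unitary.conjStarAlgAut_apply]
      rfl
    ext a b
    conv_lhs => rw [h_spec]
    rw [mul_apply, mul_apply]
    simp only [mul_diagonal, conjTranspose_apply, submatrix_apply, id]
    refine (Fintype.sum_of_injective (fun k => (e k : n))
      (Subtype.val_injective.comp e.injective) _ _ (fun i hi => ?_) fun _ => rfl).symm
    have h_zero : lam i = 0 := by
      by_contra h_ne
      exact hi ⟨e.symm ⟨i, h_ne⟩, by simp⟩
    simp [h_zero]

open scoped Matrix.Norms.L2Operator MatrixOrder in
lemma eventually_posSemidef_add_smul_of_posDef {n : Type*} [Finite n] {D H : Matrix n n ℂ}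
    (hD : D.PosDef) (hH : H.IsHermitian) : ∀ᶠ t : ℝ in 𝓝 0, (D + t • H).PosSemidef := by
  classical
  have := Fintype.ofFinite n
  cases isEmpty_or_nonempty n with
  | inl _ => exact Eventually.of_forall fun t => Subsingleton.elim 0 (D + t • H) ▸ .zero
  | inr _ =>
    obtain ⟨r, hr, h_le⟩ := (CFC.exists_pos_algebraMap_le_iff hD.isHermitian).2
      fun _ => (isStrictlyPositive_iff_posDef.2 hD).spectrum_pos
    have h_cont : Tendsto (fun t : ℝ => ‖t • H‖) (𝓝 0) (𝓝 0) := by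
      have : Continuous fun t : ℝ => ‖t • H‖ := by fun_prop
      simpa using this.tendsto 0
    filter_upwards [h_cont.eventually_lt_const hr] with t ht
    have h_low : -algebraMap ℝ (Matrix n n ℂ) ‖t • H‖ ≤ t • H :=
      IsSelfAdjoint.neg_algebraMap_norm_le_self (hH.smul (IsSelfAdjoint.all t))
    have h_norm : algebraMap ℝ (Matrix n n ℂ) ‖t • H‖ ≤ algebraMap ℝ (Matrix n n ℂ) r :=
      algebraMap_mono _ ht.le
    refine nonneg_iff_posSemidef.1 ?_
    calc (0 : Matrix n n ℂ) ≤ algebraMap ℝ _ r + -algebraMap ℝ _ ‖t • H‖ :=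
          le_add_neg_iff_le.2 h_norm
      _ ≤ D + t • H := add_le_add h_le h_low

end PosSemidef

section PerturbationSpace

variable {n m : Type*} [Fintype m]

/-- The real-linear map `Y ↦ V Y Vᴴ`. For an isometry `V` it transports matrices on the domain of
`V` to matrices supported in the range of `V`. -/
def congruence (V : Matrix n m ℂ) : Matrix m m ℂ →ₗ[ℝ] Matrix n n ℂ where
  toFun Y := V * Y * Vᴴ
  map_add' Y Z := by rw [Matrix.mul_add, Matrix.add_mul]
  map_smul' t Y := by rw [Matrix.mul_smul, Matrix.smul_mul, RingHom.id_apply]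

lemma congruence_apply (V : Matrix n m ℂ) (Y : Matrix m m ℂ) : congruence V Y = V * Y * Vᴴ := rfl

variable [Fintype n] [DecidableEq m]

lemma congruence_injective {V : Matrix n m ℂ} (hV : Vᴴ * V = 1) :
    Function.Injective (congruence V) := by
  refine Function.LeftInverse.injective (g := fun X => Vᴴ * X * V) fun Y => ?_
  calc Vᴴ * (V * Y * Vᴴ) * V = (Vᴴ * V) * Y * (Vᴴ * V) := by simp only [Matrix.mul_assoc]
    _ = Y := by rw [hV, Matrix.one_mul, Matrix.mul_one]

lemma congruence_mem_tracelessHermitian {V : Matrix n m ℂ} (hV : Vᴴ * V = 1) {Y : Matrix m m ℂ}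
    (hY : Y ∈ tracelessHermitian m) : congruence V Y ∈ tracelessHermitian n := by
  refine ⟨isHermitian_mul_mul_conjTranspose V hY.1, ?_⟩
  rw [congruence_apply, trace_mul_comm, ← Matrix.mul_assoc, hV, Matrix.one_mul, hY.2]

/-- The space of admissible perturbations of `A`: the traceless Hermitian matrices supported in the
support of `A`. The support condition is encoded as `ker A ≤ ker X`, which for Hermitian `A` and
`X` is equivalent to `range X ≤ range A`. -/
def perturbationSpace (A : Matrix n n ℂ) : Submodule ℝ (Matrix n n ℂ) where
  carrier := {X | X ∈ tracelessHermitian n ∧ ∀ v, A *ᵥ v = 0 → X *ᵥ v = 0}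
  add_mem' hX hY := ⟨add_mem hX.1 hY.1, fun v hv => by
    rw [add_mulVec, hX.2 v hv, hY.2 v hv, add_zero]⟩
  zero_mem' := ⟨zero_mem _, fun v _ => zero_mulVec v⟩
  smul_mem' t _ hX := ⟨(tracelessHermitian n).smul_mem t hX.1, fun v hv => by
    rw [smul_mulVec, hX.2 v hv, smul_zero]⟩

variable {V : Matrix n m ℂ} {w : m → ℝ}

lemma mul_mul_conjTranspose_of_mem_perturbationSpace (hV : Vᴴ * V = 1)
    {B : Matrix n m ℂ} {X : Matrix n n ℂ} (hX : X ∈ perturbationSpace (B * Vᴴ)) :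
    X * (V * Vᴴ) = X := by
  classical
  have h_compl : X * (1 - V * Vᴴ) = 0 := by
    refine ext_of_mulVec_single fun i => ?_
    rw [← mulVec_mulVec, zero_mulVec]
    refine hX.2 _ ?_
    rw [mulVec_mulVec, Matrix.mul_sub, Matrix.mul_one, Matrix.mul_assoc _ Vᴴ,
      ← Matrix.mul_assoc Vᴴ, hV, Matrix.one_mul, sub_self, zero_mulVec]
  rw [Matrix.mul_sub, Matrix.mul_one, sub_eq_zero] at h_compl
  exact h_compl.symm

lemma conjTranspose_mulVec_eq_zero (hV : Vᴴ * V = 1) (hw : ∀ k, w k ≠ 0) {v : n → ℂ}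
    (hv : (V * diagonal (fun k => (w k : ℂ)) * Vᴴ) *ᵥ v = 0) : Vᴴ *ᵥ v = 0 := by
  have h_diag : diagonal (fun k => (w k : ℂ)) *ᵥ (Vᴴ *ᵥ v) = 0 := by
    have h := congrArg (Vᴴ *ᵥ ·) hv
    simpa only [mulVec_mulVec, ← Matrix.mul_assoc, hV, Matrix.one_mul, mulVec_zero] using h
  ext k
  simpa [mulVec_diagonal, hw k] using congrFun h_diag k

lemma perturbationSpace_eq_map_congruence (hV : Vᴴ * V = 1) (hw : ∀ k, w k ≠ 0) :
    perturbationSpace (V * diagonal (fun k => (w k : ℂ)) * Vᴴ) =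
      (tracelessHermitian m).map (congruence V) := by
  ext X
  constructor
  · intro hX
    have h_right : X * (V * Vᴴ) = X := mul_mul_conjTranspose_of_mem_perturbationSpace hV hX
    have h_left : V * Vᴴ * X = X := by
      simpa [hX.1.1.eq, Matrix.mul_assoc] using congrArg conjTranspose h_right
    refine ⟨Vᴴ * X * V, ⟨isHermitian_conjTranspose_mul_mul V hX.1.1, ?_⟩, ?_⟩
    · rw [trace_mul_comm, ← Matrix.mul_assoc, h_left, hX.1.2]
    · calc V * (Vᴴ * X * V) * Vᴴ = V * Vᴴ * (X * (V * Vᴴ)) := by simp only [Matrix.mul_assoc]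
        _ = X := by rw [h_right, h_left]
  · rintro ⟨Y, hY, rfl⟩
    refine ⟨congruence_mem_tracelessHermitian hV hY, fun v hv => ?_⟩
    rw [congruence_apply, ← mulVec_mulVec, conjTranspose_mulVec_eq_zero hV hw hv, mulVec_zero]

lemma finrank_perturbationSpace {A : Matrix n n ℂ} (hA : A.PosSemidef) :
    finrank ℝ (perturbationSpace A) = A.rank ^ 2 - 1 := by
  obtain ⟨V, w, hV, hw, h_eq⟩ := exists_isometry_mul_diagonal_mul_conjTranspose hA
  conv_lhs => rw [h_eq, perturbationSpace_eq_map_congruence hV fun k => (hw k).ne']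
  rw [← (Submodule.equivMapOfInjective _ (congruence_injective hV) _).finrank_eq,
    finrank_tracelessHermitian, Fintype.card_fin]

lemma eventually_posSemidef_add_smul {A X : Matrix n n ℂ} (hA : A.PosSemidef)
    (hX : X ∈ perturbationSpace A) : ∀ᶠ t : ℝ in 𝓝 0, (A + t • X).PosSemidef := by
  obtain ⟨V, w, hV, hw, h_eq⟩ := exists_isometry_mul_diagonal_mul_conjTranspose hA
  obtain ⟨Y, hY, rfl⟩ : X ∈ (tracelessHermitian _).map (congruence V) := by
    rwa [← perturbationSpace_eq_map_congruence hV fun k => (hw k).ne', ← h_eq]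
  have h_diag : (diagonal fun k => (w k : ℂ)).PosDef :=
    PosDef.diagonal fun k => Complex.zero_lt_real.2 (hw k)
  filter_upwards [eventually_posSemidef_add_smul_of_posDef h_diag hY.1] with t ht
  have h := ht.mul_mul_conjTranspose_same V
  rw [Matrix.mul_add, Matrix.add_mul, ← h_eq, ← congruence_apply V (t • Y), map_smul] at h
  exact h

lemma perturbationSpace_le_sum {ι : Type*} {M : ι → Matrix n n ℂ} {s : Finset ι}
    (hM : ∀ i ∈ s, (M i).PosSemidef) {i : ι} (hi : i ∈ s) :
    perturbationSpace (M i) ≤ perturbationSpace (∑ j ∈ s, M j) := fun _ hX =>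
  ⟨hX.1, fun v hv => hX.2 v (mulVec_eq_zero_of_sum_mulVec_eq_zero hM hv hi)⟩

end PerturbationSpace

section RankOne

lemma rank_eq_trace_of_isIdempotentElem {K n : Type*} [Field K] [Fintype n]
    {P : Matrix n n K} (hP : IsIdempotentElem P) : (P.rank : K) = P.trace := by
  classical
  have h_idem : IsIdempotentElem (toLin' P) := by
    rw [IsIdempotentElem, Module.End.mul_eq_comp, ← toLin'_mul, hP.eq]
  rw [← trace_toLin'_eq, (LinearMap.IsIdempotentElem.isProj_range _ h_idem).trace]
  rfl

lemma isIdempotentElem_vecMulVec {R n : Type*} [Semiring R] [Fintype n] {v w : n → R}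
    (h : w ⬝ᵥ v = 1) : IsIdempotentElem (vecMulVec v w) := by
  rw [IsIdempotentElem, vecMulVec_mul_vecMulVec, h, one_smul]

variable {n : Type*} [Fintype n] {A : Matrix n n ℂ}

lemma exists_eq_vecMulVec_star (hA : A.PosSemidef) (h_rank : A.rank ≤ 1) :
    ∃ ψ : n → ℂ, A = vecMulVec ψ (star ψ) := by
  obtain ⟨V, w, -, hw, h_eq⟩ := exists_isometry_mul_diagonal_mul_conjTranspose hA
  have h_apply (a b : n) : A a b = ∑ k, V a k * w k * star (V b k) := by
    rw [congrFun₂ h_eq a b, mul_apply]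
    simp only [mul_diagonal, conjTranspose_apply]
  have : Subsingleton (Fin A.rank) := Fin.subsingleton_iff_le_one.2 h_rank
  cases isEmpty_or_nonempty (Fin A.rank) with
  | inl _ => exact ⟨0, by ext a b; simp [h_apply a b]⟩
  | inr h =>
    obtain ⟨k⟩ := h
    refine ⟨fun a => (√(w k) : ℂ) * V a k, ?_⟩
    have h_sqrt : (√(w k) : ℂ) * √(w k) = w k := by
      rw [← Complex.ofReal_mul, Real.mul_self_sqrt (hw k).le]
    ext a b
    rw [h_apply a b, Fintype.sum_subsingleton _ k, ← h_sqrt, vecMulVec_apply, Pi.star_apply,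
      star_mul', Complex.star_def, Complex.conj_ofReal]
    ring

lemma exists_unit_eq_vecMulVec_star (hA : A.PosSemidef) (h_trace : A.trace = 1)
    (h_rank : A.rank ≤ 1) : ∃ ψ : n → ℂ, star ψ ⬝ᵥ ψ = 1 ∧ A = vecMulVec ψ (star ψ) := by
  obtain ⟨ψ, rfl⟩ := exists_eq_vecMulVec_star hA h_rank
  rw [trace_vecMulVec, dotProduct_comm] at h_trace
  exact ⟨ψ, h_trace, rfl⟩

lemma isIdempotentElem_of_rank_le_one (hA : A.PosSemidef) (h_trace : A.trace = 1)
    (h_rank : A.rank ≤ 1) : IsIdempotentElem A := by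
  obtain ⟨ψ, hψ, rfl⟩ := exists_unit_eq_vecMulVec_star hA h_trace h_rank
  exact isIdempotentElem_vecMulVec hψ

end RankOne

section POVM

variable {d n : ℕ} {M : Fin n → Matrix (Fin d) (Fin d) ℂ}

lemma IsPOVM.posSemidef_one_sub (hM : IsPOVM M) (i : Fin n) : (1 - M i).PosSemidef := by
  rw [← hM.2, ← Finset.sum_erase_eq_sub (Finset.mem_univ i)]
  exact posSemidef_sum _ fun j _ => hM.1 j

lemma IsPOVM.mulVec_eq_zero_of_mulVec_eq_self (hM : IsPOVM M) {ψ : Fin d → ℂ} {i j : Fin n}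
    (hψ : M j *ᵥ ψ = ψ) (hij : i ≠ j) : M i *ᵥ ψ = 0 := by
  refine mulVec_eq_zero_of_sum_mulVec_eq_zero (s := Finset.univ.erase j) (fun k _ => hM.1 k) ?_
    (Finset.mem_erase.2 ⟨hij, Finset.mem_univ i⟩)
  rw [Finset.sum_erase_eq_sub (Finset.mem_univ j), hM.2, sub_mulVec, one_mulVec, hψ, sub_self]

lemma IsPOVM.mul_eq_zero_of_isIdempotentElem (hM : IsPOVM M) {i j : Fin n}
    (hj : IsIdempotentElem (M j)) (hij : i ≠ j) : M i * M j = 0 := by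
  refine ext_of_mulVec_single fun k => ?_
  rw [← mulVec_mulVec, zero_mulVec]
  refine hM.mulVec_eq_zero_of_mulVec_eq_self ?_ hij
  rw [mulVec_mulVec, hj.eq]

lemma IsPOVM.isIdempotentElem_sum_of_compl (hM : IsPOVM M) {s : Finset (Fin n)}
    (hs : ∀ i ∉ s, IsIdempotentElem (M i)) : IsIdempotentElem (∑ i ∈ s, M i) := by
  have h_orth : OrthogonalIdempotents fun i : ↥sᶜ => M i :=
    ⟨fun i => hs i (Finset.mem_compl.1 i.2), fun _ j hij =>
      hM.mul_eq_zero_of_isIdempotentElem (hs j (Finset.mem_compl.1 j.2))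
        (Subtype.coe_injective.ne hij)⟩
  have h_compl : IsIdempotentElem (∑ i ∈ sᶜ, M i) := by
    rw [← Finset.sum_coe_sort]
    exact h_orth.isIdempotentElem_sum
  rw [eq_sub_of_add_eq (Finset.sum_add_sum_compl s M), hM.2]
  exact h_compl.one_sub

end POVM

section ExtremePoints

variable {d n : ℕ}

/-- The convex set of POVMs on `ℂ^d` whose `i`-th effect has trace `τ i`. -/
def povmsOfTrace (τ : Fin n → ℂ) : Set (Fin n → Matrix (Fin d) (Fin d) ℂ) :=
  {M | IsPOVM M ∧ ∀ i, (M i).trace = τ i}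

variable {τ : Fin n → ℂ} {M X : Fin n → Matrix (Fin d) (Fin d) ℂ}

lemma eventually_add_smul_mem_povmsOfTrace (hM : M ∈ povmsOfTrace τ)
    (hX : ∀ i, X i ∈ perturbationSpace (M i)) (h_sum : ∑ i, X i = 0) :
    ∀ᶠ t : ℝ in 𝓝 0, M + t • X ∈ povmsOfTrace τ := by
  have h_pos : ∀ᶠ t : ℝ in 𝓝 0, ∀ i, (M i + t • X i).PosSemidef :=
    eventually_all.2 fun i => eventually_posSemidef_add_smul (hM.1.1 i) (hX i)
  filter_upwards [h_pos] with t ht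
  refine ⟨⟨ht, ?_⟩, fun i => ?_⟩
  · simp only [Pi.add_apply, Pi.smul_apply, Finset.sum_add_distrib, ← Finset.smul_sum, h_sum,
      smul_zero, add_zero, hM.1.2]
  · rw [Pi.add_apply, Pi.smul_apply, trace_add, trace_smul, (hX i).1.2, smul_zero, add_zero, hM.2 i]

lemma eq_zero_of_mem_perturbationSpace (hM : M ∈ Set.extremePoints ℝ (povmsOfTrace τ))
    (hX : ∀ i, X i ∈ perturbationSpace (M i)) (h_sum : ∑ i, X i = 0) : X = 0 := by
  have h_mem := eventually_add_smul_mem_povmsOfTrace hM.1 hX h_sum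
  have h_mem_neg := (continuous_neg.tendsto' (0 : ℝ) 0 neg_zero).eventually h_mem
  obtain ⟨t, ⟨h_add, h_sub⟩, h_ne⟩ :=
    (((h_mem.and h_mem_neg).filter_mono nhdsWithin_le_nhds).and
      (eventually_mem_nhdsWithin (a := (0 : ℝ)) (s := {0}ᶜ))).exists
  have h_mid : M ∈ openSegment ℝ (M + t • X) (M + -t • X) :=
    ⟨1 / 2, 1 / 2, by norm_num, by norm_num, by norm_num, by module⟩
  have h_eq : M + t • X = M := hM.2 h_add h_sub h_mid
  exact (smul_eq_zero.1 (add_eq_left.1 h_eq)).resolve_left h_ne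

lemma iSupIndep_perturbationSpace (hM : M ∈ Set.extremePoints ℝ (povmsOfTrace τ)) :
    iSupIndep fun i => perturbationSpace (M i) := by
  refine (iSupIndep_iff_finsetSum_eq_zero_imp_eq_zero _).2 fun s X hX h_sum i hi => ?_
  let Y : Fin n → Matrix (Fin d) (Fin d) ℂ := fun j => if j ∈ s then X j else 0
  have hY : ∀ j, Y j ∈ perturbationSpace (M j) := fun j => by
    by_cases hj : j ∈ s
    · simpa only [Y, if_pos hj] using hX j hj
    · simp only [Y, if_neg hj, zero_mem]
  have hY_sum : ∑ j, Y j = 0 := by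
    rw [Finset.sum_ite_mem, Finset.univ_inter, h_sum]
  calc X i = Y i := (if_pos hi).symm
    _ = 0 := congrFun (eq_zero_of_mem_perturbationSpace hM hY hY_sum) i

lemma sum_rank_sq_sub_one_le (hM : M ∈ Set.extremePoints ℝ (povmsOfTrace τ)) (s : Finset (Fin n)) :
    ∑ i ∈ s, ((M i).rank ^ 2 - 1) ≤ (∑ i ∈ s, M i).rank ^ 2 - 1 := by
  have h_pos : ∀ i ∈ s, (M i).PosSemidef := fun i _ => hM.1.1.1 i
  calc ∑ i ∈ s, ((M i).rank ^ 2 - 1) = ∑ i ∈ s, finrank ℝ (perturbationSpace (M i)) :=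
        Finset.sum_congr rfl fun i hi => (finrank_perturbationSpace (h_pos i hi)).symm
    _ = finrank ℝ (⨆ i ∈ s, perturbationSpace (M i) : Submodule ℝ _) :=
        (finrank_biSup_of_iSupIndep (iSupIndep_perturbationSpace hM) s).symm
    _ ≤ finrank ℝ (perturbationSpace (∑ i ∈ s, M i)) :=
        Submodule.finrank_mono (iSup₂_le fun _ hi => perturbationSpace_le_sum h_pos hi)
    _ = (∑ i ∈ s, M i).rank ^ 2 - 1 := finrank_perturbationSpace (posSemidef_sum s h_pos)

/-- The set `P₁(d,n)` of `n`-outcome POVMs on `ℂ^d` with trace-one effects; it is nonempty only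
for `n = d`. -/
def traceOnePOVMs (d n : ℕ) : Set (Fin n → Matrix (Fin d) (Fin d) ℂ) :=
  povmsOfTrace fun _ => 1

lemma rank_sum_filter_one_lt_rank (hM : M ∈ traceOnePOVMs d n) :
    (∑ i with 1 < (M i).rank, M i).rank = Finset.card {i | 1 < (M i).rank} := by
  have h_idem : ∀ i ∉ ({i | 1 < (M i).rank} : Finset (Fin n)), IsIdempotentElem (M i) := by
    intro i hi
    have h_rank : (M i).rank ≤ 1 := by simpa using hi
    exact isIdempotentElem_of_rank_le_one (hM.1.1 i) (hM.2 i) h_rank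
  have h := rank_eq_trace_of_isIdempotentElem (hM.1.isIdempotentElem_sum_of_compl h_idem)
  rw [trace_sum, Finset.sum_congr rfl fun i _ => hM.2 i, Finset.sum_const, nsmul_one] at h
  exact_mod_cast h

lemma card_one_lt_rank_eq_zero_or_four_le (hM : M ∈ Set.extremePoints ℝ (traceOnePOVMs d n)) :
    Finset.card {i | 1 < (M i).rank} = 0 ∨ 4 ≤ Finset.card {i | 1 < (M i).rank} := by
  set s : Finset (Fin n) := {i | 1 < (M i).rank}
  have h_three : ∀ i ∈ s, 3 ≤ (M i).rank ^ 2 - 1 := fun i hi =>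
    Nat.le_sub_of_add_le (Nat.pow_le_pow_left (Finset.mem_filter.1 hi).2 2)
  have h_card : s.card * 3 ≤ s.card ^ 2 - 1 :=
    calc s.card * 3 ≤ ∑ i ∈ s, ((M i).rank ^ 2 - 1) := by
          simpa only [smul_eq_mul] using Finset.card_nsmul_le_sum s _ 3 h_three
      _ ≤ (∑ i ∈ s, M i).rank ^ 2 - 1 := sum_rank_sq_sub_one_le hM s
      _ = s.card ^ 2 - 1 := by rw [rank_sum_filter_one_lt_rank hM.1]
  by_contra! h
  obtain ⟨h_ne, h_lt⟩ := h
  interval_cases s.card <;> omega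

lemma rank_le_one_of_mem_extremePoints (hn : n ≤ 3)
    (hM : M ∈ Set.extremePoints ℝ (traceOnePOVMs d n)) (i : Fin n) : (M i).rank ≤ 1 := by
  have h_lt : Finset.card {i | 1 < (M i).rank} < 4 :=
    calc Finset.card {i | 1 < (M i).rank} ≤ n := card_finset_fin_le _
      _ < 4 := Nat.lt_succ_of_le hn
  have h_zero := (card_one_lt_rank_eq_zero_or_four_le hM).resolve_right h_lt.not_ge
  exact not_lt.1 (Finset.filter_eq_empty_iff.1 (Finset.card_eq_zero.1 h_zero) (Finset.mem_univ i))

lemma exists_orthonormal_of_mem_extremePoints (hn : n ≤ 3)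
    (hM : M ∈ Set.extremePoints ℝ (traceOnePOVMs d n)) :
    ∃ ψ : Fin n → Fin d → ℂ, (∀ i j, star (ψ i) ⬝ᵥ ψ j = if i = j then 1 else 0) ∧
      ∀ i, M i = vecMulVec (ψ i) (star (ψ i)) := by
  choose ψ h_unit h_eq using fun i => exists_unit_eq_vecMulVec_star (hM.1.1.1 i) (hM.1.2 i)
    (rank_le_one_of_mem_extremePoints hn hM i)
  refine ⟨ψ, fun i j => ?_, h_eq⟩
  split_ifs with hij
  · rw [hij, h_unit]
  · have h_self : M j *ᵥ ψ j = ψ j := by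
      rw [h_eq, vecMulVec_mulVec, h_unit, MulOpposite.op_one, one_smul]
    have h_zero : MulOpposite.op (star (ψ i) ⬝ᵥ ψ j) • ψ i = 0 := by
      rw [← vecMulVec_mulVec, ← h_eq, hM.1.1.mulVec_eq_zero_of_mulVec_eq_self h_self hij]
    have h_ne : ψ i ≠ 0 := fun h => by simpa [h] using h_unit i
    exact MulOpposite.op_injective ((smul_eq_zero.1 h_zero).resolve_right h_ne)

end ExtremePoints

section ConvexHullOfProjective

open scoped Matrix.Norms.L2Operator MatrixOrder in
lemma isCompact_setOf_posSemidef_and_one_sub (n : Type*) [Finite n] [DecidableEq n] :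
    IsCompact {A : Matrix n n ℂ | A.PosSemidef ∧ (1 - A).PosSemidef} := by
  have := Fintype.ofFinite n
  have h_Icc : {A : Matrix n n ℂ | A.PosSemidef ∧ (1 - A).PosSemidef} = Set.Icc 0 1 := by
    ext A
    exact and_congr nonneg_iff_posSemidef.symm Matrix.le_iff.symm
  have h_bounded : Set.Icc (0 : Matrix n n ℂ) 1 ⊆ Metric.closedBall 0 1 := fun A hA =>
    mem_closedBall_zero_iff.2 ((CStarAlgebra.norm_le_one_iff_of_nonneg A hA.1).2 hA.2)
  have : ProperSpace (Matrix n n ℂ) := FiniteDimensional.proper ℂ _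
  rw [h_Icc]
  exact (isCompact_closedBall _ _).of_isClosed_subset isClosed_Icc h_bounded

variable {d n : ℕ}

lemma isCompact_povmsOfTrace (τ : Fin n → ℂ) :
    IsCompact (povmsOfTrace τ : Set (Fin n → Matrix (Fin d) (Fin d) ℂ)) := by
  have h_eq : (povmsOfTrace τ : Set (Fin n → Matrix (Fin d) (Fin d) ℂ)) =
      (Set.univ.pi fun _ => {A | A.PosSemidef ∧ (1 - A).PosSemidef}) ∩
        ({M | ∑ i, M i = 1} ∩ ⋂ i, {M | (M i).trace = τ i}) := by
    ext M
    simp only [Set.mem_inter_iff, Set.mem_iInter]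
    exact ⟨fun hM => ⟨fun i _ => ⟨hM.1.1 i, hM.1.posSemidef_one_sub i⟩, hM.1.2, hM.2⟩,
      fun hM => ⟨⟨fun i => (hM.1 i trivial).1, hM.2.1⟩, hM.2.2⟩⟩
  rw [h_eq]
  exact (isCompact_univ_pi fun _ => isCompact_setOf_posSemidef_and_one_sub (Fin d)).inter_right <|
    (isClosed_eq (by fun_prop) (by fun_prop)).inter <|
      isClosed_iInter fun i => isClosed_eq (by fun_prop) (by fun_prop)

lemma convex_povmsOfTrace (τ : Fin n → ℂ) :
    Convex ℝ (povmsOfTrace τ : Set (Fin n → Matrix (Fin d) (Fin d) ℂ)) := by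
  intro M hM N hN a b ha hb hab
  refine ⟨⟨fun i => ((hM.1.1 i).smul ha).add ((hN.1.1 i).smul hb), ?_⟩, fun i => ?_⟩
  · simp only [Pi.add_apply, Pi.smul_apply, Finset.sum_add_distrib, ← Finset.smul_sum, hM.1.2,
      hN.1.2, ← add_smul, hab, one_smul]
  · rw [Pi.add_apply, trace_add, Pi.smul_apply, Pi.smul_apply, trace_smul, trace_smul, hM.2, hN.2,
      ← add_smul, hab, one_smul]

/-- Rank-one projective measurements on `ℂ^d`, with `n` outcomes: the set `RankOneProjective` in
arbitrary dimension. -/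
def rankOneProjectiveMeasurements (d n : ℕ) : Set (Fin n → Matrix (Fin d) (Fin d) ℂ) :=
  {P | IsPOVM P ∧ ∀ i, (P i).IsHermitian ∧ P i * P i = P i ∧ (P i).trace = 1}

lemma isCompact_rankOneProjectiveMeasurements : IsCompact (rankOneProjectiveMeasurements d n) := by
  have h_eq : rankOneProjectiveMeasurements d n =
      traceOnePOVMs d n ∩ ⋂ i, {P | P i * P i = P i} := by
    ext P
    simp only [Set.mem_inter_iff, Set.mem_iInter]
    exact ⟨fun hP => ⟨⟨hP.1, fun i => (hP.2 i).2.2⟩, fun i => (hP.2 i).2.1⟩,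
      fun hP => ⟨hP.1.1, fun i => ⟨(hP.1.1.1 i).isHermitian, hP.2 i, hP.1.2 i⟩⟩⟩
  rw [h_eq]
  exact (isCompact_povmsOfTrace _).inter_right
    (isClosed_iInter fun i => isClosed_eq (by fun_prop) (by fun_prop))

lemma extremePoints_traceOnePOVMs_subset (hn : n ≤ 3) :
    Set.extremePoints ℝ (traceOnePOVMs d n) ⊆ rankOneProjectiveMeasurements d n := fun _ hM =>
  ⟨hM.1.1, fun i => ⟨(hM.1.1.1 i).isHermitian, isIdempotentElem_of_rank_le_one (hM.1.1.1 i)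
    (hM.1.2 i) (rank_le_one_of_mem_extremePoints hn hM i), hM.1.2 i⟩⟩

lemma traceOnePOVMs_subset_convexHull (hn : n ≤ 3) :
    traceOnePOVMs d n ⊆ convexHull ℝ (rankOneProjectiveMeasurements d n) := by
  have : LocallyConvexSpace ℝ (Matrix (Fin d) (Fin d) ℂ) :=
    inferInstanceAs (LocallyConvexSpace ℝ (Fin d → Fin d → ℂ))
  calc traceOnePOVMs d n = closure (convexHull ℝ (Set.extremePoints ℝ (traceOnePOVMs d n))) :=
        (closure_convexHull_extremePoints (isCompact_povmsOfTrace _) (convex_povmsOfTrace _)).symm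
    _ ⊆ convexHull ℝ (rankOneProjectiveMeasurements d n) :=
        closure_minimal (convexHull_mono (extremePoints_traceOnePOVMs_subset hn))
          (isCompact_convexHull isCompact_rankOneProjectiveMeasurements).isClosed

end ConvexHullOfProjective

theorem extremePoints_P1_general {d : ℕ} (hd : d ≤ 3) :
    (∀ M ∈ Set.extremePoints ℝ (traceOnePOVMs d d),
      ∃ ψ : Fin d → (Fin d → ℂ),
        (∀ i j, star (ψ i) ⬝ᵥ ψ j = if i = j then 1 else 0) ∧
        ∀ i, M i = vecMulVec (ψ i) (star (ψ i))) ∧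
    (∀ M ∈ traceOnePOVMs d d, M ∈ convexHull ℝ (rankOneProjectiveMeasurements d d)) :=
  ⟨fun _ hM => exists_orthonormal_of_mem_extremePoints hd hM,
    fun _ hM => traceOnePOVMs_subset_convexHull hd hM⟩

theorem extremePoints_P1 :
    (∀ M ∈ Set.extremePoints ℝ P1,
      ∃ ψ : Fin 3 → (Fin 3 → ℂ),
        (∀ i j, star (ψ i) ⬝ᵥ ψ j = if i = j then 1 else 0) ∧
        ∀ i, M i = Matrix.vecMulVec (ψ i) (star (ψ i))) ∧
    (∀ M ∈ P1, M ∈ convexHull ℝ RankOneProjective) :=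
  extremePoints_P1_general le_rfl
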